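/- For every real a < 0 there is no locally integrable function f : ℝ → ℂ such that for all s ∈ ℂ with a < Re(s) < 0 the function t ↦ e^{−st} f(t) is Lebesgue integrable on ℝ and ζ(s)/s = ∫_ℝ e^{−st} f(t) dt. In other words, ζ(s)/s admits no absolutely convergent bilateral Laplace representation with locally integrable determining function on any vertical strip adjacent to the left of the imaginary axis. -/

import Mathlib

open MeasureTheory

/-!
Writing `x = exp t` turns the bilateral Laplace transform of `f` into the Mellin transform of
`h x = f (log x)`, and the representation of `ζ(s) / s` on a line `re s = σ` with `-1 < σ < 0` says
that `h` has Mellin transform `ζ(s) / s` at `-s`. The natural candidate for `h` is the sawtooth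
`1 / 2 - {x}`, whose Mellin integral converges only conditionally there. To compare the two we pass
to primitives: both `∫ y in 0..x, h y` and the bounded function `({x} - {x}²) / 2` have the
absolutely convergent Mellin transform `ζ(s) / (s (s + 1))` at `-s - 1`, so they agree by Mellin
inversion. Hence `h` has integral `1 / 8` over each `(n, n + 1 / 2]`, and comparison with
`∑ (n + 1) ^ (-σ - 1)` contradicts the absolute convergence of its Mellin integral.
-/

open Set Filter Topology Asymptotics

section Mellin

variable {E : Type*} [NormedAddCommGroup E] [NormedSpace ℂ E] {f g : ℝ → E} {s : ℂ} {m : E}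

lemma hasMellin_congr (h : EqOn f g (Ioi 0)) : HasMellin f s m ↔ HasMellin g s m := by
  have hsmul : EqOn (fun x : ℝ => (x : ℂ) ^ (s - 1) • f x)
      (fun x : ℝ => (x : ℂ) ^ (s - 1) • g x) (Ioi 0) := fun x hx => by simp only [h hx]
  rw [HasMellin, HasMellin, MellinConvergent, MellinConvergent,
    integrableOn_congr_fun hsmul measurableSet_Ioi, mellin, mellin,
    setIntegral_congr_fun measurableSet_Ioi hsmul]

lemma hasMellin_cpow_Ioi (a : ℂ) (hs : s.re + a.re < 0) :
    HasMellin ((Ioi 1).indicator fun x : ℝ => (x : ℂ) ^ a) s (-(1 / (s + a))) := by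
  have hre : (s - 1 + a).re < -1 := by
    simp only [Complex.add_re, Complex.sub_re, Complex.one_re]; linarith
  have hmul : EqOn (fun x : ℝ => (x : ℂ) ^ (s - 1) • (x : ℂ) ^ a)
      (fun x : ℝ => (x : ℂ) ^ (s - 1 + a)) (Ioi 1) := fun x hx =>
    (Complex.cpow_add _ _ (Complex.ofReal_ne_zero.2 (zero_lt_one.trans hx).ne')).symm
  simp only [HasMellin, MellinConvergent, mellin, ← indicator_smul]
  rw [integrableOn_indicator_iff measurableSet_Ioi, setIntegral_indicator measurableSet_Ioi,
    Ioi_inter_Ioi, Ioi_inter_Ioi, max_eq_left zero_le_one, max_eq_right zero_le_one,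
    integrableOn_congr_fun hmul measurableSet_Ioi, setIntegral_congr_fun measurableSet_Ioi hmul,
    integral_Ioi_cpow_of_lt hre zero_lt_one]
  refine ⟨integrableOn_Ioi_cpow_of_lt hre zero_lt_one, ?_⟩
  rw [Complex.ofReal_one, Complex.one_cpow, neg_div, sub_add_eq_add_sub, sub_add_cancel]

lemma hasMellin_comp_log (hf : Integrable fun t : ℝ => Complex.exp (s * t) • f t) :
    HasMellin (fun x => f (Real.log x)) s (∫ t : ℝ, Complex.exp (s * t) • f t) := by
  have himage : Real.exp '' univ = Ioi 0 := by rw [image_univ, Real.range_exp]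
  have hderiv (t : ℝ) (_ : t ∈ univ) : HasDerivWithinAt Real.exp (Real.exp t) univ t :=
    (Real.hasDerivAt_exp t).hasDerivWithinAt
  have hsubst (t : ℝ) : |Real.exp t| • (Real.exp t : ℂ) ^ (s - 1) • f (Real.log (Real.exp t)) =
      Complex.exp (s * t) • f t := by
    rw [Real.abs_exp, Real.log_exp, ← Complex.coe_smul, smul_smul,
      Complex.cpow_def_of_ne_zero (by simp), ← Complex.ofReal_log (Real.exp_pos t).le,
      Real.log_exp, Complex.ofReal_exp, ← Complex.exp_add]
    congr 2
    ring
  rw [HasMellin, MellinConvergent, mellin, ← himage,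
    integrableOn_image_iff_integrableOn_abs_deriv_smul MeasurableSet.univ hderiv
      Real.exp_injective.injOn,
    integral_image_eq_integral_abs_deriv_smul MeasurableSet.univ hderiv
      Real.exp_injective.injOn]
  simp only [hsubst, integrableOn_univ, setIntegral_univ, and_true]
  exact hf

lemma eqOn_of_hasMellin [CompleteSpace E] {F : ℂ → E} {σ : ℝ}
    (hf : ∀ s : ℂ, s.re = σ → HasMellin f s (F s)) (hg : ∀ s : ℂ, s.re = σ → HasMellin g s (F s))
    (hfc : ContinuousOn f (Ioi 0)) (hgc : ContinuousOn g (Ioi 0)) : EqOn f g (Ioi 0) := by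
  have hsub (s : ℂ) (hs : s.re = σ) : HasMellin (fun x => f x - g x) s 0 := by
    have h := hasMellin_sub (hf s hs).1 (hg s hs).1
    rwa [(hf s hs).2, (hg s hs).2, sub_self] at h
  have hline (y : ℝ) : mellin (fun x => f x - g x) (σ + y * Complex.I) = 0 :=
    (hsub _ (by simp)).2
  intro x hx
  have hinv := mellinInv_mellin_eq σ (fun x => f x - g x) hx (hsub σ (Complex.ofReal_re σ)).1
    (by simp only [Complex.VerticalIntegrable, hline]; exact integrable_zero _ _ _)
    ((hfc.sub hgc).continuousAt (Ioi_mem_nhds hx))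
  rw [← sub_eq_zero, ← hinv]
  simp only [mellinInv, hline, smul_zero, integral_zero]

lemma aestronglyMeasurable_of_mellinConvergent (hf : MellinConvergent f s) :
    AEStronglyMeasurable f (volume.restrict (Ioi 0)) := by
  have hcpow : Measurable fun x : ℝ => (x : ℂ) ^ (1 - s) := by fun_prop
  refine (hcpow.aestronglyMeasurable.smul hf.aestronglyMeasurable).congr ?_
  filter_upwards [ae_restrict_mem measurableSet_Ioi] with x hx
  rw [Pi.smul_apply', smul_smul, ← Complex.cpow_add _ _ (Complex.ofReal_ne_zero.2 (ne_of_gt hx)),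
    sub_add_sub_cancel', sub_self, Complex.cpow_zero, one_smul]

lemma norm_le_rpow_mul_norm_cpow_smul (v : E) (hs : s.re ≤ 1) {x b : ℝ} (hx : x ∈ Ioc 0 b) :
    ‖v‖ ≤ b ^ (1 - s.re) * ‖(x : ℂ) ^ (s - 1) • v‖ := by
  rw [norm_smul, Complex.norm_cpow_eq_rpow_re_of_pos hx.1, Complex.sub_re, Complex.one_re]
  calc ‖v‖ = x ^ (1 - s.re) * (x ^ (s.re - 1) * ‖v‖) := by
        rw [← mul_assoc, ← Real.rpow_add hx.1, sub_add_sub_cancel', sub_self, Real.rpow_zero,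
          one_mul]
    _ ≤ b ^ (1 - s.re) * (x ^ (s.re - 1) * ‖v‖) := by
        have := hx.1.le
        have := Real.rpow_le_rpow hx.1.le hx.2 (sub_nonneg.2 hs)
        gcongr

lemma integrableOn_Ioc_of_mellinConvergent (hf : MellinConvergent f s) (hs : s.re ≤ 1) (b : ℝ) :
    IntegrableOn f (Ioc 0 b) := by
  refine Integrable.mono' ((hf.mono_set Ioc_subset_Ioi_self).norm.const_mul (b ^ (1 - s.re)))
    ((aestronglyMeasurable_of_mellinConvergent hf).mono_set Ioc_subset_Ioi_self) ?_
  filter_upwards [ae_restrict_mem measurableSet_Ioc] with x hx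
  exact norm_le_rpow_mul_norm_cpow_smul (f x) hs hx

lemma summable_rpow_mul_norm_setIntegral_Ioc (hf : MellinConvergent f s) (hs : s.re ≤ 1) {θ : ℝ}
    (hθ : θ ≤ 1) :
    Summable fun n : ℕ => ((n + 1 : ℕ) : ℝ) ^ (s.re - 1) * ‖∫ x in Ioc (n : ℝ) (n + θ), f x‖ := by
  have hsub (n : ℕ) : Ioc (n : ℝ) (n + θ) ⊆ Ioi 0 := fun x hx => n.cast_nonneg.trans_lt hx.1
  have hdisj : Pairwise (Function.onFun Disjoint fun n : ℕ => Ioc (n : ℝ) (n + θ)) := by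
    refine (pairwise_disjoint_on _).2 fun m n hmn => Ioc_disjoint_Ioc_of_le ?_
    have : (m : ℝ) + 1 ≤ n := mod_cast hmn
    linarith
  have hsum := (hasSum_integral_iUnion (fun n : ℕ => measurableSet_Ioc) hdisj
    (hf.mono_set (iUnion_subset hsub)).norm).summable
  refine hsum.of_nonneg_of_le (fun n => by positivity) fun n => ?_
  rw [← neg_sub 1 s.re, Real.rpow_neg (by positivity), inv_mul_le_iff₀ (by positivity),
    ← integral_const_mul]
  refine norm_integral_le_of_norm_le ((hf.mono_set (hsub n)).norm.const_mul _) ?_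
  filter_upwards [ae_restrict_mem measurableSet_Ioc] with x hx
  refine norm_le_rpow_mul_norm_cpow_smul (f x) hs ⟨hsub n hx, hx.2.trans ?_⟩
  push_cast
  gcongr

lemma re_neg_of_setIntegral_Ioc_eq (hf : MellinConvergent f s) (hs : s.re ≤ 1) {θ : ℝ}
    (hθ : θ ≤ 1) {c : E} (hc : c ≠ 0) (h : ∀ n : ℕ, ∫ x in Ioc (n : ℝ) (n + θ), f x = c) :
    s.re < 0 := by
  have hsum := summable_rpow_mul_norm_setIntegral_Ioc hf hs hθ
  simp only [h] at hsum
  rw [summable_mul_right_iff (norm_ne_zero_iff.2 hc),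
    summable_nat_add_iff (f := fun n : ℕ => (n : ℝ) ^ (s.re - 1)), Real.summable_nat_rpow] at hsum
  linarith

/-- The kernel `x ^ (s - 1) • f y` on `0 < y < x`, whose two iterated integrals express the Mellin
transform at `s` of the primitive `x ↦ ∫ y in Ioc 0 x, f y`. -/
noncomputable def mellinPrimitiveKernel (f : ℝ → E) (s : ℂ) (x y : ℝ) : E :=
  (Ioi y).indicator (fun x : ℝ => (x : ℂ) ^ (s - 1)) x • f y

lemma norm_mellinPrimitiveKernel (f : ℝ → E) (s : ℂ) {y : ℝ} (hy : 0 < y) (x : ℝ) :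
    ‖mellinPrimitiveKernel f s x y‖ =
      (Ioi y).indicator (fun x : ℝ => x ^ (s.re - 1)) x * ‖f y‖ := by
  rw [mellinPrimitiveKernel, norm_smul]
  congr 1
  by_cases hx : x ∈ Ioi y
  · rw [indicator_of_mem hx, indicator_of_mem hx,
      Complex.norm_cpow_eq_rpow_re_of_pos (hy.trans hx), Complex.sub_re, Complex.one_re]
  · rw [indicator_of_notMem hx, indicator_of_notMem hx, norm_zero]

lemma setIntegral_Ioi_indicator_Ioi {F : Type*} [NormedAddCommGroup F] [NormedSpace ℝ F]
    (φ : ℝ → F) {a b : ℝ} (hab : a ≤ b) :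
    ∫ x in Ioi a, (Ioi b).indicator φ x = ∫ x in Ioi b, φ x := by
  rw [setIntegral_indicator measurableSet_Ioi, Ioi_inter_Ioi, max_eq_right hab]

lemma integral_mellinPrimitiveKernel_left [CompleteSpace E] (f : ℝ → E) (hs : s.re < 0) {y : ℝ}
    (hy : 0 < y) :
    ∫ x in Ioi 0, mellinPrimitiveKernel f s x y = -s⁻¹ • (y : ℂ) ^ (s + 1 - 1) • f y := by
  have hre : (s - 1).re < -1 := by rw [Complex.sub_re, Complex.one_re]; linarith
  simp only [mellinPrimitiveKernel]
  rw [integral_smul_const, setIntegral_Ioi_indicator_Ioi _ hy.le,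
    integral_Ioi_cpow_of_lt hre hy, smul_smul, sub_add_cancel, add_sub_cancel_right]
  congr 1
  ring

lemma integral_mellinPrimitiveKernel_right (f : ℝ → E) (s : ℂ) (x : ℝ) :
    ∫ y in Ioi 0, mellinPrimitiveKernel f s x y =
      (x : ℂ) ^ (s - 1) • ∫ y in Ioc 0 x, f y := by
  have hindicator (y : ℝ) : mellinPrimitiveKernel f s x y =
      (Iio x).indicator (fun y => (x : ℂ) ^ (s - 1) • f y) y := by
    by_cases hy : y < x <;> simp [mellinPrimitiveKernel, hy]
  simp only [hindicator]
  rw [setIntegral_indicator measurableSet_Iio, Ioi_inter_Iio, integral_smul,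
    integral_Ioc_eq_integral_Ioo]

lemma integrable_mellinPrimitiveKernel (hf : MellinConvergent f (s + 1)) (hs : s.re < 0) :
    Integrable (Function.uncurry (mellinPrimitiveKernel f s))
      ((volume.restrict (Ioi 0)).prod (volume.restrict (Ioi 0))) := by
  have hre : (s - 1).re < -1 := by rw [Complex.sub_re, Complex.one_re]; linarith
  have hkernel : Measurable fun p : ℝ × ℝ =>
      (Ioi p.2).indicator (fun x : ℝ => (x : ℂ) ^ (s - 1)) p.1 :=
    (by fun_prop : Measurable fun p : ℝ × ℝ => (p.1 : ℂ) ^ (s - 1)).indicator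
      (measurableSet_lt measurable_snd measurable_fst)
  have hmeas : AEStronglyMeasurable (Function.uncurry (mellinPrimitiveKernel f s))
      ((volume.restrict (Ioi 0)).prod (volume.restrict (Ioi 0))) :=
    hkernel.aestronglyMeasurable.smul (aestronglyMeasurable_of_mellinConvergent hf).comp_snd
  rw [integrable_prod_iff' hmeas]
  constructor
  · filter_upwards [ae_restrict_mem measurableSet_Ioi] with y hy
    have hcpow := integrableOn_Ioi_cpow_of_lt hre hy
    exact (((integrable_indicator_iff measurableSet_Ioi).2 hcpow).integrableOn).smul_const (f y)
  · refine (hf.norm.const_mul (-s.re)⁻¹).congr ?_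
    filter_upwards [ae_restrict_mem measurableSet_Ioi] with y hy
    simp only [Function.uncurry_apply_pair, norm_mellinPrimitiveKernel f s hy]
    rw [integral_mul_const, setIntegral_Ioi_indicator_Ioi _ (le_of_lt hy),
      integral_Ioi_rpow_of_lt (by linarith) hy, norm_smul,
      Complex.norm_cpow_eq_rpow_re_of_pos hy]
    simp only [sub_add_cancel, add_sub_cancel_right]
    ring

lemma hasMellin_setIntegral_Ioc [CompleteSpace E] (hf : HasMellin f (s + 1) m) (hs : s.re < 0) :
    HasMellin (fun x => ∫ y in Ioc 0 x, f y) s (-s⁻¹ • m) := by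
  have hint := integrable_mellinPrimitiveKernel hf.1 hs
  refine ⟨hint.integral_prod_left.congr (ae_of_all _ fun x =>
    integral_mellinPrimitiveKernel_right f s x), ?_⟩
  calc mellin (fun x => ∫ y in Ioc 0 x, f y) s
      = ∫ x in Ioi 0, ∫ y in Ioi 0, mellinPrimitiveKernel f s x y := by
        simp only [mellin, integral_mellinPrimitiveKernel_right]
    _ = ∫ y in Ioi 0, ∫ x in Ioi 0, mellinPrimitiveKernel f s x y :=
        integral_integral_swap hint
    _ = ∫ y in Ioi (0 : ℝ), -s⁻¹ • (y : ℂ) ^ (s + 1 - 1) • f y :=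
        setIntegral_congr_fun measurableSet_Ioi fun y hy =>
          integral_mellinPrimitiveKernel_left f hs hy
    _ = -s⁻¹ • m := by rw [integral_smul, ← hf.2, mellin]

lemma continuousOn_setIntegral_Ioc {F : Type*} [NormedAddCommGroup F] [NormedSpace ℝ F] {f : ℝ → F}
    {a : ℝ} (hf : ∀ b, IntegrableOn f (Ioc a b)) :
    ContinuousOn (fun x => ∫ y in Ioc a x, f y) (Ioi a) := by
  intro x hx
  have hcont := intervalIntegral.continuousOn_primitive
    ((integrableOn_Icc_iff_integrableOn_Ioc).2 (hf (x + 1)))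
  exact (hcont.continuousAt (Icc_mem_nhds hx (lt_add_one x))).continuousWithinAt

end Mellin

section Sawtooth

/-- The continuous `1`-periodic primitive `({x} - {x}²) / 2` of the sawtooth `1 / 2 - {x}`. -/
noncomputable def sawtoothPrimitive (x : ℝ) : ℝ := (Int.fract x - Int.fract x ^ 2) / 2

lemma continuous_sawtoothPrimitive : Continuous sawtoothPrimitive :=
  ContinuousOn.comp_fract'' (f := fun y : ℝ => (y - y ^ 2) / 2) (by fun_prop) (by norm_num)

lemma continuous_ofReal_sawtoothPrimitive :
    Continuous fun x : ℝ => (sawtoothPrimitive x : ℂ) :=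
  Complex.continuous_ofReal.comp continuous_sawtoothPrimitive

lemma norm_sawtoothPrimitive_le_one (x : ℝ) : ‖(sawtoothPrimitive x : ℂ)‖ ≤ 1 := by
  rw [Complex.norm_real, Real.norm_eq_abs, sawtoothPrimitive, abs_le]
  have h0 := Int.fract_nonneg x
  have h1 := (Int.fract_lt_one x).le
  constructor <;> nlinarith

lemma sawtoothPrimitive_natCast_add (n : ℕ) (x : ℝ) :
    sawtoothPrimitive (n + x) = sawtoothPrimitive x := by
  rw [sawtoothPrimitive, sawtoothPrimitive, Int.fract_natCast_add]

lemma sawtoothPrimitive_of_mem_Icc {x : ℝ} (hx : x ∈ Icc 0 1) :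
    sawtoothPrimitive x = (x - x ^ 2) / 2 := by
  rcases eq_or_lt_of_le hx.2 with rfl | hx1
  · simp [sawtoothPrimitive]
  · rw [sawtoothPrimitive, Int.fract_eq_self.2 ⟨hx.1, hx1⟩]

lemma sawtoothPrimitive_natCast (n : ℕ) : sawtoothPrimitive n = 0 := by
  rw [sawtoothPrimitive, Int.fract_natCast]
  norm_num

lemma sawtoothPrimitive_zero : sawtoothPrimitive 0 = 0 := mod_cast sawtoothPrimitive_natCast 0

lemma sawtoothPrimitive_natCast_add_half (n : ℕ) : sawtoothPrimitive (n + 1 / 2) = 1 / 8 := by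
  rw [sawtoothPrimitive_natCast_add, sawtoothPrimitive_of_mem_Icc (by norm_num)]
  norm_num

lemma add_sawtoothPrimitive_of_mem_Icc {n : ℕ} {x : ℝ} (hx : x ∈ Icc (n : ℝ) (n + 1)) :
    (x ^ 2 - x) / 2 + sawtoothPrimitive x = n * x - n * (n + 1) / 2 := by
  have hxn : x - n ∈ Icc (0 : ℝ) 1 := ⟨sub_nonneg.2 hx.1, by linarith [hx.2]⟩
  rw [← add_sub_cancel (n : ℝ) x, sawtoothPrimitive_natCast_add, sawtoothPrimitive_of_mem_Icc hxn]
  ring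

lemma hasDerivWithinAt_add_sawtoothPrimitive {x : ℝ} (hx : 0 ≤ x) :
    HasDerivWithinAt (fun y => (y ^ 2 - y) / 2 + sawtoothPrimitive y) (⌊x⌋₊ : ℝ) (Ioi x) x := by
  have hderiv : HasDerivAt (fun y : ℝ => ⌊x⌋₊ * y - ⌊x⌋₊ * (⌊x⌋₊ + 1) / 2) (⌊x⌋₊ : ℝ) x := by
    simpa only [mul_one, id] using ((hasDerivAt_id x).const_mul (⌊x⌋₊ : ℝ)).sub_const _
  refine hderiv.hasDerivWithinAt.congr_of_eventuallyEq ?_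
    (add_sawtoothPrimitive_of_mem_Icc ⟨Nat.floor_le hx, (Nat.lt_floor_add_one x).le⟩)
  filter_upwards [Ioo_mem_nhdsGT (Nat.lt_floor_add_one x)] with y hy
  exact add_sawtoothPrimitive_of_mem_Icc ⟨(Nat.floor_le hx).trans hy.1.le, hy.2.le⟩

lemma setIntegral_Ioc_natFloor {x : ℝ} (hx : 0 ≤ x) :
    ∫ y in Ioc 0 x, (⌊y⌋₊ : ℝ) = (x ^ 2 - x) / 2 + sawtoothPrimitive x := by
  have hmono : Monotone fun y : ℝ => (⌊y⌋₊ : ℝ) := Nat.mono_cast.comp Nat.floor_mono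
  have hcont : Continuous fun y => (y ^ 2 - y) / 2 + sawtoothPrimitive y := by
    have := continuous_sawtoothPrimitive
    fun_prop
  rw [← intervalIntegral.integral_of_le hx,
    intervalIntegral.integral_eq_sub_of_hasDeriv_right_of_le hx hcont.continuousOn
      (fun y hy => hasDerivWithinAt_add_sawtoothPrimitive hy.1.le) hmono.intervalIntegrable,
    sawtoothPrimitive_zero]
  ring

end Sawtooth

section Zeta

variable {s : ℂ}

lemma hasMellin_indicator_quadratic {S : Set ℝ} {a b : ℂ}
    (ha : HasMellin (S.indicator fun x : ℝ => (x : ℂ) ^ (1 : ℂ)) s a)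
    (hb : HasMellin (S.indicator fun x : ℝ => (x : ℂ) ^ (2 : ℂ)) s b) :
    HasMellin (S.indicator fun x : ℝ => ((x : ℂ) - x ^ 2) / 2) s ((a - b) / 2) := by
  have hsub := hasMellin_sub ha.1 hb.1
  rw [ha.2, hb.2] at hsub
  have heq : (S.indicator fun x : ℝ => ((x : ℂ) - x ^ 2) / 2) = fun x =>
      (S.indicator (fun x : ℝ => (x : ℂ) ^ (1 : ℂ)) x -
        S.indicator (fun x : ℝ => (x : ℂ) ^ (2 : ℂ)) x) / 2 := by
    ext x
    by_cases hx : x ∈ S <;> simp [hx]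
  rw [heq]
  exact ⟨hsub.1.div_const 2, by rw [mellin_div_const, hsub.2]⟩

lemma natFloor_eq_zero_of_notMem_Ici {x : ℝ} (hx : x ∉ Ici 1) : (⌊x⌋₊ : ℂ) = 0 := by
  rw [Nat.floor_eq_zero.2 (not_le.1 hx), Nat.cast_zero]

lemma mellinConvergent_natFloor (hs : s.re < -1) :
    MellinConvergent (fun x : ℝ => (⌊x⌋₊ : ℂ)) s := by
  have hnorm (x : ℝ) : ‖(⌊x⌋₊ : ℂ)‖ ≤ ‖x‖ := by
    rw [Complex.norm_natCast, Real.norm_eq_abs]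
    exact (Nat.cast_le.2 (Nat.floor_le_floor (le_abs_self x))).trans (Nat.floor_le (abs_nonneg x))
  refine mellinConvergent_of_isBigO_rpow (a := -1) (b := s.re - 1) ?_ ?_ hs ?_ (sub_one_lt _)
  · exact (continuous_id.locallyIntegrable.locallyIntegrableOn (Ioi 0)).mono
      (by fun_prop : Measurable fun x : ℝ => (⌊x⌋₊ : ℂ)).aestronglyMeasurable (ae_of_all _ hnorm)
  · refine .of_bound 1 ?_
    filter_upwards with x
    simpa only [neg_neg, Real.rpow_one, one_mul] using hnorm x
  · refine (isBigO_zero _ _).congr' ?_ EventuallyEq.rfl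
    filter_upwards [Ioo_mem_nhdsGT (zero_lt_one' ℝ)] with x hx
    exact (natFloor_eq_zero_of_notMem_Ici (not_le.2 hx.2)).symm

lemma hasMellin_natFloor (hs : 1 < s.re) :
    HasMellin (fun x : ℝ => (⌊x⌋₊ : ℂ)) (-s) (riemannZeta s / s) := by
  have hs0 : s ≠ 0 := fun h => by norm_num [h] at hs
  have hL := LSeries_eq_mul_integral' 1 zero_le_one hs
    (.of_bound 1 (by filter_upwards with n; simp))
  rw [LSeries_one_eq_riemannZeta hs] at hL
  refine ⟨mellinConvergent_natFloor (by rw [Complex.neg_re]; linarith), ?_⟩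
  rw [eq_div_iff hs0, mul_comm, hL, mellin, ← integral_Ici_eq_integral_Ioi (x := (1 : ℝ)),
    setIntegral_eq_of_subset_of_forall_sdiff_eq_zero measurableSet_Ioi
      (Ici_subset_Ioi.2 (zero_lt_one' ℝ)) fun x hx => by
        rw [natFloor_eq_zero_of_notMem_Ici hx.2, smul_zero]]
  simp only [Pi.one_apply, Finset.sum_const, Nat.card_Icc, add_tsub_cancel_right, nsmul_eq_mul,
    mul_one, smul_eq_mul, neg_add', mul_comm]

lemma indicator_Ioi_sawtoothPrimitive {x : ℝ} (hx : 0 < x) :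
    (Ioi 1).indicator (fun x : ℝ => (sawtoothPrimitive x : ℂ)) x =
      (Ioi 1).indicator (fun x : ℝ => ((x : ℂ) - x ^ 2) / 2) x + ∫ y in Ioc 0 x, (⌊y⌋₊ : ℂ) := by
  have hfloor : ∫ y in Ioc 0 x, (⌊y⌋₊ : ℂ) = (((x ^ 2 - x) / 2 + sawtoothPrimitive x : ℝ) : ℂ) := by
    rw [← setIntegral_Ioc_natFloor hx.le, ← integral_complex_ofReal]
    simp only [Complex.ofReal_natCast]
  rw [hfloor]
  by_cases hx1 : x ∈ Ioi 1
  · simp only [indicator_of_mem hx1]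
    push_cast
    ring
  · simp only [indicator_of_notMem hx1, sawtoothPrimitive_of_mem_Icc ⟨hx.le, not_lt.1 hx1⟩]
    push_cast
    ring

lemma hasMellin_indicator_Ioi_sawtoothPrimitive (hs : s.re < -2) :
    HasMellin ((Ioi 1).indicator fun x : ℝ => (sawtoothPrimitive x : ℂ)) s
      ((1 / (s + 2) - 1 / (s + 1)) / 2 + riemannZeta (-s - 1) / (s * (s + 1))) := by
  have hs0 : s ≠ 0 := fun h => by norm_num [h] at hs
  have hs1 : s + 1 ≠ 0 := fun h => by norm_num [eq_neg_of_add_eq_zero_left h] at hs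
  have hquadratic := hasMellin_indicator_quadratic
    (hasMellin_cpow_Ioi (s := s) 1 (by rw [Complex.one_re]; linarith))
    (hasMellin_cpow_Ioi (s := s) 2 (by rw [Complex.re_ofNat]; linarith))
  have hfloor := hasMellin_natFloor (s := -s - 1) (by
    rw [Complex.sub_re, Complex.neg_re, Complex.one_re]; linarith)
  rw [neg_sub', neg_neg, sub_neg_eq_add] at hfloor
  have hprimitive := hasMellin_setIntegral_Ioc hfloor (by linarith)
  have hadd := hasMellin_add hquadratic.1 hprimitive.1
  rw [hquadratic.2, hprimitive.2] at hadd
  convert (hasMellin_congr fun x hx => indicator_Ioi_sawtoothPrimitive hx).2 hadd using 1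
  rw [neg_sub_neg, smul_eq_mul, ← neg_add']
  field_simp

lemma mellinConvergent_and_differentiableAt_mellin_indicator_Ioi_sawtoothPrimitive
    (hs : s.re < 0) :
    MellinConvergent ((Ioi 1).indicator fun x : ℝ => (sawtoothPrimitive x : ℂ)) s ∧
      DifferentiableAt ℂ (mellin ((Ioi 1).indicator fun x : ℝ => (sawtoothPrimitive x : ℂ))) s := by
  have hloc : LocallyIntegrableOn ((Ioi 1).indicator fun x : ℝ => (sawtoothPrimitive x : ℂ))
      (Ioi 0) :=
    (continuous_ofReal_sawtoothPrimitive.locallyIntegrable.indicator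
      measurableSet_Ioi).locallyIntegrableOn _
  have htop : ((Ioi 1).indicator fun x : ℝ => (sawtoothPrimitive x : ℂ)) =O[atTop]
      fun x : ℝ => x ^ (-0 : ℝ) := by
    refine .of_bound 1 (Eventually.of_forall fun x => ?_)
    rw [neg_zero, Real.rpow_zero, norm_one, mul_one]
    exact (norm_indicator_le_norm_self _ x).trans (norm_sawtoothPrimitive_le_one x)
  have hzero : ((Ioi 1).indicator fun x : ℝ => (sawtoothPrimitive x : ℂ)) =O[𝓝[>] 0]
      fun x : ℝ => x ^ (-(s.re - 1)) := by
    refine (isBigO_zero _ _).congr' ?_ EventuallyEq.rfl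
    filter_upwards [Ioo_mem_nhdsGT (zero_lt_one' ℝ)] with x hx
    rw [indicator_of_notMem (notMem_Ioi.2 hx.2.le)]
  exact ⟨mellinConvergent_of_isBigO_rpow hloc htop hs hzero (sub_one_lt _),
    mellin_differentiableAt_of_isBigO_rpow hloc htop hs hzero (sub_one_lt _)⟩

lemma riemannZeta_neg_sub_one (hs : s + 2 ≠ 0) :
    riemannZeta (-s - 1) = riemannZeta₀ (-s - 1) - (s + 2)⁻¹ := by
  have hpole : -s - 1 - 1 = -(s + 2) := by ring
  rw [riemannZeta_eq_inv_sub_add (sub_ne_zero.1 (hpole ▸ neg_ne_zero.2 hs)), hpole, inv_neg]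
  ring

/- Clearing the denominators and replacing `ζ` by its pole-free part `riemannZeta₀` makes both
sides holomorphic on the whole half-plane, so the identity theorem applies across `s = -1` and
`s = -2`. -/
lemma mul_mellin_indicator_Ioi_sawtoothPrimitive (hs : s.re < 0) :
    s * (s + 1) * mellin ((Ioi 1).indicator fun x : ℝ => (sawtoothPrimitive x : ℂ)) s =
      riemannZeta₀ (-s - 1) - 1 / 2 := by
  have hopen : IsOpen {s : ℂ | s.re < 0} := isOpen_lt Complex.continuous_re continuous_const
  have hleft : DifferentiableOn ℂ (fun s => s * (s + 1) *
      mellin ((Ioi 1).indicator fun x : ℝ => (sawtoothPrimitive x : ℂ)) s) {s | s.re < 0} := by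
    intro s hs
    have := (mellinConvergent_and_differentiableAt_mellin_indicator_Ioi_sawtoothPrimitive hs).2
    exact DifferentiableAt.differentiableWithinAt (by fun_prop)
  have hright : Differentiable ℂ fun s => riemannZeta₀ (-s - 1) - 1 / 2 := by fun_prop
  refine (hleft.analyticOnNhd hopen).eqOn_of_preconnected_of_eventuallyEq
    (hright.differentiableOn.analyticOnNhd hopen) (convex_halfSpace_re_lt 0).isPreconnected
    (z₀ := -3) (by simp) ?_ hs
  filter_upwards [(isOpen_lt Complex.continuous_re continuous_const).mem_nhds
    (show (-3 : ℂ) ∈ {s : ℂ | s.re < -2} by norm_num)] with s (hs : s.re < -2)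
  have hs0 : s ≠ 0 := fun h => by norm_num [h] at hs
  have hs1 : s + 1 ≠ 0 := fun h => by norm_num [eq_neg_of_add_eq_zero_left h] at hs
  have hs2 : s + 2 ≠ 0 := fun h => by norm_num [eq_neg_of_add_eq_zero_left h] at hs
  rw [(hasMellin_indicator_Ioi_sawtoothPrimitive hs).2, riemannZeta_neg_sub_one hs2]
  field_simp
  ring

lemma hasMellin_sawtoothPrimitive (hs : -1 < s.re) (hs' : s.re < 0) :
    HasMellin (fun x : ℝ => (sawtoothPrimitive x : ℂ)) s
      (riemannZeta (-s - 1) / (s * (s + 1))) := by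
  have hs0 : s ≠ 0 := fun h => by norm_num [h] at hs'
  have hs1 : s + 1 ≠ 0 := fun h => by norm_num [eq_neg_of_add_eq_zero_left h] at hs
  have hs2 : s + 2 ≠ 0 := fun h => by norm_num [eq_neg_of_add_eq_zero_left h] at hs
  have hsplit : EqOn (fun x : ℝ => (sawtoothPrimitive x : ℂ)) (fun x =>
      (Ioc 0 1).indicator (fun x : ℝ => ((x : ℂ) - x ^ 2) / 2) x +
        (Ioi 1).indicator (fun x : ℝ => (sawtoothPrimitive x : ℂ)) x) (Ioi 0) := by
    intro x (hx : 0 < x)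
    rcases le_or_gt x 1 with hx1 | hx1
    · simp [sawtoothPrimitive_of_mem_Icc ⟨hx.le, hx1⟩, hx, hx1]
    · simp [hx1]
  have hquadratic := hasMellin_indicator_quadratic
    (hasMellin_cpow_Ioc (s := s) 1 (by rw [Complex.one_re]; linarith))
    (hasMellin_cpow_Ioc (s := s) 2 (by rw [Complex.re_ofNat]; linarith))
  have hadd := hasMellin_add hquadratic.1
    (mellinConvergent_and_differentiableAt_mellin_indicator_Ioi_sawtoothPrimitive hs').1
  have htail := mul_mellin_indicator_Ioi_sawtoothPrimitive hs'
  rw [hquadratic.2, eq_div_of_mul_eq (mul_ne_zero hs0 hs1) ((mul_comm _ _).trans htail)] at hadd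
  convert (hasMellin_congr hsplit).2 hadd using 1
  rw [riemannZeta_neg_sub_one hs2]
  field_simp
  ring

variable {h : ℝ → ℂ} {σ : ℝ}

lemma setIntegral_Ioc_eq_sawtoothPrimitive (hσ : -1 < σ) (hσ0 : σ < 0)
    (hh : ∀ s : ℂ, s.re = σ → HasMellin h (-s) (riemannZeta s / s)) {x : ℝ} (hx : 0 ≤ x) :
    ∫ y in Ioc 0 x, h y = sawtoothPrimitive x := by
  have hint (b : ℝ) : IntegrableOn h (Ioc 0 b) :=
    integrableOn_Ioc_of_mellinConvergent (hh σ (Complex.ofReal_re σ)).1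
      (by rw [Complex.neg_re, Complex.ofReal_re]; linarith) b
  have hprimitive (s : ℂ) (hs : s.re = -σ - 1) : HasMellin (fun x => ∫ y in Ioc 0 x, h y) s
      (riemannZeta (-s - 1) / (s * (s + 1))) := by
    have hderiv := hh (-s - 1) (by
      rw [Complex.sub_re, Complex.neg_re, Complex.one_re]; linarith)
    rw [neg_sub', neg_neg, sub_neg_eq_add] at hderiv
    convert hasMellin_setIntegral_Ioc hderiv (by linarith) using 1
    rw [smul_eq_mul, ← neg_add', div_neg, neg_mul_neg, inv_mul_eq_div, div_div, mul_comm s]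
  have hsawtooth (s : ℂ) (hs : s.re = -σ - 1) :=
    hasMellin_sawtoothPrimitive (s := s) (by linarith) (by linarith)
  rcases hx.eq_or_lt with rfl | hx
  · rw [Ioc_self, setIntegral_empty, sawtoothPrimitive_zero, Complex.ofReal_zero]
  · exact eqOn_of_hasMellin hprimitive hsawtooth (continuousOn_setIntegral_Ioc hint)
      continuous_ofReal_sawtoothPrimitive.continuousOn hx

lemma not_forall_hasMellin_neg_riemannZeta_div (hσ : -1 < σ) (hσ0 : σ < 0) :
    ¬ ∀ s : ℂ, s.re = σ → HasMellin h (-s) (riemannZeta s / s) := by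
  intro hh
  have hconv := (hh σ (Complex.ofReal_re σ)).1
  have hre : (-σ : ℂ).re = -σ := by rw [Complex.neg_re, Complex.ofReal_re]
  have hint (b : ℝ) := integrableOn_Ioc_of_mellinConvergent hconv (by linarith) b
  have hhalf (n : ℕ) : ∫ x in Ioc (n : ℝ) (n + 1 / 2), h x = 1 / 8 := by
    have hsub : Ioc (n : ℝ) (n + 1 / 2) ⊆ Ioc 0 (n + 1 / 2) := Ioc_subset_Ioc_left n.cast_nonneg
    have hunion := setIntegral_union (Ioc_disjoint_Ioc_of_le le_rfl) measurableSet_Ioc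
      (hint n) ((hint (n + 1 / 2)).mono_set hsub)
    rw [Ioc_union_Ioc_eq_Ioc n.cast_nonneg (by linarith),
      setIntegral_Ioc_eq_sawtoothPrimitive hσ hσ0 hh n.cast_nonneg,
      setIntegral_Ioc_eq_sawtoothPrimitive hσ hσ0 hh (by positivity), sawtoothPrimitive_natCast,
      sawtoothPrimitive_natCast_add_half] at hunion
    rw [eq_sub_of_add_eq' hunion.symm]
    norm_num
  have := re_neg_of_setIntegral_Ioc_eq hconv (by linarith) (by norm_num) (by norm_num) hhalf
  linarith

end Zeta

theorem statement10_general (σ : ℝ) (hσ : -1 < σ) (hσ0 : σ < 0) :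
    ¬ ∃ f : ℝ → ℂ, ∀ s : ℂ, s.re = σ →
      Integrable (fun t : ℝ => Complex.exp (-s * t) * f t) ∧
        riemannZeta s / s = ∫ t : ℝ, Complex.exp (-s * t) * f t := by
  rintro ⟨f, hf⟩
  refine not_forall_hasMellin_neg_riemannZeta_div (h := fun x => f (Real.log x)) hσ hσ0
    fun s hs => ?_
  rw [(hf s hs).2]
  exact hasMellin_comp_log (hf s hs).1

theorem statement10 (a : ℝ) (ha : a < 0) :
    ¬ ∃ f : ℝ → ℂ, MeasureTheory.LocallyIntegrable f MeasureTheory.volume ∧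
      ∀ s : ℂ, a < s.re → s.re < 0 →
        MeasureTheory.Integrable (fun t : ℝ => Complex.exp (-s * t) * f t) ∧
        riemannZeta s / s = ∫ t : ℝ, Complex.exp (-s * t) * f t := by
  rintro ⟨f, -, hf⟩
  obtain ⟨σ, hσ, hσ0⟩ := exists_between (max_lt ha (neg_one_lt_zero (R := ℝ)))
  exact statement10_general σ (max_lt_iff.1 hσ).2 hσ0
    ⟨f, fun s hs => hf s (hs ▸ (max_lt_iff.1 hσ).1) (hs ▸ hσ0)⟩
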